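/- Let ρ>0, ρ̃>0 with ρ≠ρ̃, G>0, P₀>0 and k̂₀∈ℝ be real numbers, and set N := k̂₀(ρ−ρ̃) − ρ; assume N<0 (which holds in particular when 0<k̂₀<1). Then: (i) Q(t) := P₀² − 2G·P₀·N·t + ρρ̃G²t² > 0 for all t≥0; (ii) defining P(t) := √(Q(t)) and k̂(t) := (ρ − P′(t)/G)/(ρ−ρ̃) for t≥0, one has P(0)=P₀, k̂(0)=k̂₀, P′(t) = −G·(k̂(t)(ρ−ρ̃) − ρ), and (P·k̂)′(t) = −ρ·G·(k̂(t) − 1) for all t≥0. -/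

import Mathlib

/-- `Q(t) = P₀² − 2GP₀Nt + ρρ̃G²t²`, the square of the shock mass (formula (34)). -/
noncomputable def Qf (ρ ρt G P₀ N t : ℝ) : ℝ :=
  P₀ ^ 2 - 2 * G * P₀ * N * t + ρ * ρt * G ^ 2 * t ^ 2

/-- `P(t) = √Q(t)`, the shock mass (formula (34)). -/
noncomputable def Pf (ρ ρt G P₀ N : ℝ) : ℝ → ℝ :=
  fun t => Real.sqrt (Qf ρ ρt G P₀ N t)

/-- `k̂(t) = (ρ − P′(t)/G)/(ρ − ρ̃)`, the normalized momentum coefficient. -/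
noncomputable def khatf (ρ ρt G P₀ N : ℝ) : ℝ → ℝ :=
  fun t => (ρ - deriv (Pf ρ ρt G P₀ N) t / G) / (ρ - ρt)

/-! Completing the square, `Q = (P₀ - √(ρρ̃)Gt)² + 2GP₀(√(ρρ̃) - N)t`, which is positive for `t ≥ 0`
when `N < √(ρρ̃)`. Since `P² = Q`, the product `PP′ = Q′/2` is affine in `t` with slope `ρρ̃G²`.
Solving the first equation for `k̂` gives `(ρ - ρ̃)Pk̂ = ρP - PP′/G`, whose derivative `ρP′ - ρρ̃G`
equals `-(ρ - ρ̃)ρG(k̂ - 1)` by the first equation again. -/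

section ExplicitSolution

variable {ρ ρt G P₀ khat₀ N t : ℝ}

theorem Qf_zero : Qf ρ ρt G P₀ N 0 = P₀ ^ 2 := by
  simp [Qf]

theorem Qf_eq_sq_add (h : 0 ≤ ρ * ρt) :
    Qf ρ ρt G P₀ N t =
      (P₀ - √(ρ * ρt) * G * t) ^ 2 + 2 * G * P₀ * (√(ρ * ρt) - N) * t := by
  rw [Qf]
  linear_combination -(G ^ 2 * t ^ 2) * Real.sq_sqrt h

theorem Qf_pos_of_lt_sqrt (h : 0 ≤ ρ * ρt) (hG : 0 < G) (hP₀ : 0 < P₀) (hN : N < √(ρ * ρt))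
    (ht : 0 ≤ t) : 0 < Qf ρ ρt G P₀ N t := by
  rcases ht.eq_or_lt with rfl | ht
  · exact Qf_zero ▸ pow_pos hP₀ 2
  · rw [Qf_eq_sq_add h]
    have hlinear : 0 < 2 * G * P₀ * (√(ρ * ρt) - N) * t :=
      mul_pos (mul_pos (by positivity) (sub_pos.2 hN)) ht
    exact add_pos_of_nonneg_of_pos (sq_nonneg _) hlinear

theorem hasDerivAt_Qf :
    HasDerivAt (Qf ρ ρt G P₀ N) (2 * (ρ * ρt * G ^ 2 * t - G * P₀ * N)) t := by
  have hlinear := ((hasDerivAt_id t).const_mul (2 * G * P₀ * N)).const_sub (P₀ ^ 2)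
  have hquadratic := (hasDerivAt_pow 2 t).const_mul (ρ * ρt * G ^ 2)
  exact (hlinear.add hquadratic).congr_deriv (by push_cast; ring)

theorem Pf_zero (hP₀ : 0 ≤ P₀) : Pf ρ ρt G P₀ N 0 = P₀ := by
  rw [Pf, Qf_zero, Real.sqrt_sq hP₀]

theorem hasDerivAt_Pf (hQ : 0 < Qf ρ ρt G P₀ N t) :
    HasDerivAt (Pf ρ ρt G P₀ N) ((ρ * ρt * G ^ 2 * t - G * P₀ * N) / Pf ρ ρt G P₀ N t) t :=
  (hasDerivAt_Qf.sqrt hQ.ne').congr_deriv (mul_div_mul_left _ _ two_ne_zero)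

theorem Pf_mul_deriv_Pf (hQ : 0 < Qf ρ ρt G P₀ N t) :
    Pf ρ ρt G P₀ N t * deriv (Pf ρ ρt G P₀ N) t = ρ * ρt * G ^ 2 * t - G * P₀ * N := by
  rw [(hasDerivAt_Pf hQ).deriv]
  exact mul_div_cancel₀ _ (Real.sqrt_pos.2 hQ).ne'

theorem deriv_Pf_eq (hne : ρ ≠ ρt) (hG : G ≠ 0) :
    deriv (Pf ρ ρt G P₀ N) t = -(G * (khatf ρ ρt G P₀ N t * (ρ - ρt) - ρ)) := by
  have hjump : ρ - ρt ≠ 0 := sub_ne_zero.2 hne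
  rw [khatf]
  field_simp
  ring

theorem khatf_zero (hne : ρ ≠ ρt) (hG : G ≠ 0) (hP₀ : 0 < P₀)
    (hN : N = khat₀ * (ρ - ρt) - ρ) : khatf ρ ρt G P₀ N 0 = khat₀ := by
  have hjump : ρ - ρt ≠ 0 := sub_ne_zero.2 hne
  have hQ : 0 < Qf ρ ρt G P₀ N 0 := Qf_zero ▸ pow_pos hP₀ 2
  have hderiv : deriv (Pf ρ ρt G P₀ N) 0 = -(G * N) := by
    rw [(hasDerivAt_Pf hQ).deriv, Pf_zero hP₀.le]
    field_simp
    ring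
  rw [khatf, hderiv, hN]
  field_simp
  ring

theorem Pf_mul_khatf (hG : G ≠ 0) (hQ : 0 < Qf ρ ρt G P₀ N t) :
    Pf ρ ρt G P₀ N t * khatf ρ ρt G P₀ N t =
      (ρ * Pf ρ ρt G P₀ N t - (ρ * ρt * G * t - P₀ * N)) / (ρ - ρt) := by
  have haffine : Pf ρ ρt G P₀ N t * deriv (Pf ρ ρt G P₀ N) t / G = ρ * ρt * G * t - P₀ * N := by
    rw [Pf_mul_deriv_Pf hQ]
    field_simp
  rw [← haffine, khatf]
  ring

theorem hasDerivAt_Pf_mul_khatf (hne : ρ ≠ ρt) (hG : G ≠ 0) (hQ : 0 < Qf ρ ρt G P₀ N t) :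
    HasDerivAt (fun s => Pf ρ ρt G P₀ N s * khatf ρ ρt G P₀ N s)
      (-(ρ * G * (khatf ρ ρt G P₀ N t - 1))) t := by
  have hjump : ρ - ρt ≠ 0 := sub_ne_zero.2 hne
  have hP := (hasDerivAt_Pf hQ).differentiableAt.hasDerivAt
  have haffine := ((hasDerivAt_id t).const_mul (ρ * ρt * G)).sub_const (P₀ * N)
  have hexplicit := ((hP.const_mul ρ).sub haffine).div_const (ρ - ρt)
  have hQ_near : ∀ᶠ s in nhds t, 0 < Qf ρ ρt G P₀ N s :=
    hasDerivAt_Qf.continuousAt.eventually_const_lt hQ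
  refine (hexplicit.congr_of_eventuallyEq (hQ_near.mono fun s => Pf_mul_khatf hG)).congr_deriv ?_
  rw [deriv_Pf_eq hne hG]
  field_simp
  ring

end ExplicitSolution

theorem stmt_9_general (ρ ρt G P₀ khat₀ N : ℝ)
    (hρρt : 0 ≤ ρ * ρt) (hne : ρ ≠ ρt) (hG : 0 < G) (hP₀ : 0 < P₀)
    (hN : N = khat₀ * (ρ - ρt) - ρ) (hN_lt : N < √(ρ * ρt)) :
    (∀ t : ℝ, 0 ≤ t → 0 < Qf ρ ρt G P₀ N t) ∧
    Pf ρ ρt G P₀ N 0 = P₀ ∧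
    khatf ρ ρt G P₀ N 0 = khat₀ ∧
    (∀ t : ℝ, 0 ≤ t → HasDerivAt (Pf ρ ρt G P₀ N)
      (-(G * (khatf ρ ρt G P₀ N t * (ρ - ρt) - ρ))) t) ∧
    (∀ t : ℝ, 0 ≤ t →
      HasDerivAt (fun s => Pf ρ ρt G P₀ N s * khatf ρ ρt G P₀ N s)
        (-(ρ * G * (khatf ρ ρt G P₀ N t - 1))) t) := by
  have hQ (t : ℝ) (ht : 0 ≤ t) : 0 < Qf ρ ρt G P₀ N t :=
    Qf_pos_of_lt_sqrt hρρt hG hP₀ hN_lt ht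
  refine ⟨hQ, Pf_zero hP₀.le, khatf_zero hne hG.ne' hP₀ hN, fun t ht => ?_,
    fun t ht => hasDerivAt_Pf_mul_khatf hne hG.ne' (hQ t ht)⟩
  rw [← deriv_Pf_eq hne hG.ne']
  exact (hasDerivAt_Pf (hQ t ht)).differentiableAt.hasDerivAt

/-- Explicit solution (formula (34)) of the ODE system (33). -/
theorem stmt_9 (ρ ρt G P₀ khat₀ N : ℝ)
    (hρ : 0 < ρ) (hρt : 0 < ρt) (hne : ρ ≠ ρt) (hG : 0 < G) (hP₀ : 0 < P₀)
    (hN : N = khat₀ * (ρ - ρt) - ρ) (hNneg : N < 0) :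
    (∀ t : ℝ, 0 ≤ t → 0 < Qf ρ ρt G P₀ N t) ∧
    Pf ρ ρt G P₀ N 0 = P₀ ∧
    khatf ρ ρt G P₀ N 0 = khat₀ ∧
    (∀ t : ℝ, 0 ≤ t → deriv (Pf ρ ρt G P₀ N) t =
      -(G * (khatf ρ ρt G P₀ N t * (ρ - ρt) - ρ))) ∧
    (∀ t : ℝ, 0 ≤ t →
      deriv (fun s => Pf ρ ρt G P₀ N s * khatf ρ ρt G P₀ N s) t =
        -(ρ * G * (khatf ρ ρt G P₀ N t - 1))) := by
  obtain ⟨hQ, hP_zero, hk_zero, hP, hPk⟩ := stmt_9_general ρ ρt G P₀ khat₀ N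
    (mul_pos hρ hρt).le hne hG hP₀ hN (hNneg.trans_le (Real.sqrt_nonneg _))
  exact ⟨hQ, hP_zero, hk_zero, fun t ht => (hP t ht).deriv, fun t ht => (hPk t ht).deriv⟩
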